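/- arXiv:2403.07348 — 3 statements merged into one kernel-verified Lean document; each statement's English description precedes it below -/
import Mathlib

section
/- Every element of the group K generated by k₁ : x ↦ −x̄ i and k₂ : x ↦ −j x̄ k can be written uniquely in the form k₁^{e₁} ∘ k₂^{e₂} with e₁, e₂ ∈ {0, 1, 2, 3}: for all e₁, e₂, f₁, f₂ ∈ {0,1,2,3}, if k₁^{e₁} ∘ k₂^{e₂} = k₁^{f₁} ∘ k₂^{f₂} then e₁ = f₁ and e₂ = f₂, and every g ∈ K equals k₁^{e₁} ∘ k₂^{e₂} for some e₁, e₂ ∈ {0,1,2,3}. -/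
open Quaternion

noncomputable section

def qi : ℍ[ℝ] := ⟨0, 1, 0, 0⟩
def qj : ℍ[ℝ] := ⟨0, 0, 1, 0⟩
def qk : ℍ[ℝ] := ⟨0, 0, 0, 1⟩

lemma norm_qi : ‖qi‖ = 1 := by
  have h : normSq qi = 1 := by rw [Quaternion.normSq_def']; simp [qi]
  have h2 := Quaternion.normSq_eq_norm_mul_self qi
  nlinarith [norm_nonneg qi]

lemma norm_qj : ‖qj‖ = 1 := by
  have h : normSq qj = 1 := by rw [Quaternion.normSq_def']; simp [qj]
  have h2 := Quaternion.normSq_eq_norm_mul_self qj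
  nlinarith [norm_nonneg qj]

lemma norm_qk : ‖qk‖ = 1 := by
  have h : normSq qk = 1 := by rw [Quaternion.normSq_def']; simp [qk]
  have h2 := Quaternion.normSq_eq_norm_mul_self qk
  nlinarith [norm_nonneg qk]

/-- Build a linear isometry equivalence of `ℍ[ℝ]` from a norm-preserving linear map. -/
def toIso (f : ℍ[ℝ] →ₗ[ℝ] ℍ[ℝ]) (h : ∀ x, ‖f x‖ = ‖x‖) : ℍ[ℝ] ≃ₗᵢ[ℝ] ℍ[ℝ] :=
  LinearIsometryEquiv.ofSurjective ⟨f, h⟩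
    (LinearMap.injective_iff_surjective.mp (LinearIsometry.injective ⟨f, h⟩))

/-- k₁ : x ↦ −x̄ i -/
def k1 : ℍ[ℝ] ≃ₗᵢ[ℝ] ℍ[ℝ] :=
  toIso
    { toFun := fun x => -(star x * qi)
      map_add' := fun x y => by simp [star_add, add_mul, add_comm]
      map_smul' := fun r x => by simp [Quaternion.star_smul, smul_mul_assoc] }
    (fun x => by simp [norm_mul, Quaternion.norm_star, norm_qi])

/-- k₂ : x ↦ −j x̄ k -/
def k2 : ℍ[ℝ] ≃ₗᵢ[ℝ] ℍ[ℝ] :=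
  toIso
    { toFun := fun x => -(qj * star x * qk)
      map_add' := fun x y => by simp [star_add, mul_add, add_mul, add_comm]
      map_smul' := fun r x => by
        simp [Quaternion.star_smul, smul_mul_assoc, mul_smul_comm] }
    (fun x => by simp [norm_mul, Quaternion.norm_star, norm_qj, norm_qk])

@[simp] lemma k1_apply (x : ℍ[ℝ]) : k1 x = -(star x * qi) := rfl
@[simp] lemma k2_apply (x : ℍ[ℝ]) : k2 x = -(qj * star x * qk) := rfl

/-- The group `K`. -/
def K : Subgroup (ℍ[ℝ] ≃ₗᵢ[ℝ] ℍ[ℝ]) := Subgroup.closure {k1, k2}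

/-!
Both generators have order `4`, the involution `k1 ^ 2` is `x ↦ -i x i`, and `k2 ^ 2` is its
negative.
Hence `k1 ^ 2` commutes with `k2`, and together with `(k2 * k1) ^ 2 = 1` this moves every power of
`k2` past `k1`: the products `k1 ^ m * k2 ^ n` form a group. Such a product determines its factors
because `⟨k1⟩` and `⟨k2⟩` meet trivially: a nontrivial intersection would be a `2`-group,
hence contain the unique involution of each, whereas `k1 ^ 2 ≠ k2 ^ 2`.
-/

section Group

variable {G : Type*} [Group G] {a b g : G}

lemma zpow_mul_of_commute_sq (hcomm : Commute (a ^ 2) b) (hsq : (b * a) ^ 2 = 1) (n : ℤ) :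
    b ^ n * a = a ^ (1 - 2 * n) * b ^ (-n) := by
  have hconj : SemiconjBy a ((a ^ 2)⁻¹ * b⁻¹) b := by
    have hinv : b * a = (b * a)⁻¹ := by rwa [eq_inv_iff_mul_eq_one, ← sq]
    rw [SemiconjBy, hinv]
    group
  calc b ^ n * a = a * ((a ^ 2)⁻¹ * b⁻¹) ^ n := (hconj.zpow_right n).eq.symm
    _ = a * ((a ^ 2)⁻¹ ^ n * b⁻¹ ^ n) := by rw [hcomm.inv_inv.mul_zpow]
    _ = a ^ (1 - 2 * n) * b ^ (-n) := by group

lemma zpow_mul_inv_of_commute_sq (hcomm : Commute (a ^ 2) b) (hsq : (b * a) ^ 2 = 1) (n : ℤ) :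
    b ^ n * a⁻¹ = a ^ (-1 - 2 * n) * b ^ (-n) := by
  rw [mul_inv_eq_iff_eq_mul, mul_assoc, zpow_mul_of_commute_sq hcomm hsq]
  group

theorem mem_closure_pair_iff_of_commute_sq (hcomm : Commute (a ^ 2) b) (hsq : (b * a) ^ 2 = 1) :
    g ∈ Subgroup.closure {a, b} ↔ ∃ m n : ℤ, a ^ m * b ^ n = g := by
  constructor
  · intro hg
    induction hg using Subgroup.closure_induction_right with
    | one => exact ⟨0, 0, by simp⟩
    | mul_right x _ y hy ih =>
      obtain ⟨m, n, rfl⟩ := ih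
      obtain rfl | rfl := hy
      · exact ⟨m + (1 - 2 * n), -n, by
          rw [mul_assoc, zpow_mul_of_commute_sq hcomm hsq, zpow_add, mul_assoc]⟩
      · exact ⟨m, n + 1, by rw [zpow_add_one, mul_assoc]⟩
    | mul_inv_cancel x _ y hy ih =>
      obtain ⟨m, n, rfl⟩ := ih
      obtain rfl | rfl := hy
      · exact ⟨m + (-1 - 2 * n), -n, by
          rw [mul_assoc, zpow_mul_inv_of_commute_sq hcomm hsq, zpow_add, mul_assoc]⟩
      · exact ⟨m, n - 1, by rw [zpow_sub_one, mul_assoc]⟩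
  · rintro ⟨m, n, rfl⟩
    exact mul_mem (zpow_mem (Subgroup.subset_closure (by simp)) m)
      (zpow_mem (Subgroup.subset_closure (by simp)) n)

lemma exists_pow_lt_orderOf_eq_zpow (ha : IsOfFinOrder a) (m : ℤ) :
    ∃ e < orderOf a, a ^ e = a ^ m := by
  classical
  simpa using ha.mem_zpowers_iff_mem_range_orderOf.mp (Subgroup.zpow_mem_zpowers a m)

lemma eq_pow_of_mem_zpowers_of_orderOf_eq_two {k : ℕ} (ha : orderOf a = 2 * k)
    (hg : g ∈ Subgroup.zpowers a) (hg2 : orderOf g = 2) : g = a ^ k := by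
  obtain ⟨z, rfl⟩ := Subgroup.mem_zpowers_iff.mp hg
  obtain ⟨hsq, hne⟩ := orderOf_eq_prime_iff.mp hg2
  obtain ⟨t, rfl⟩ : (k : ℤ) ∣ z := by
    rw [← zpow_natCast, ← zpow_mul, ← orderOf_dvd_iff_zpow_eq_one, ha, mul_comm z] at hsq
    exact Int.dvd_of_mul_dvd_mul_left two_ne_zero (by exact_mod_cast hsq)
  have hk : (a ^ k) ^ 2 = 1 := by rw [← pow_mul, mul_comm, ← ha, pow_orderOf_eq_one]
  have ht : Odd t := by
    by_contra ht
    obtain ⟨s, rfl⟩ := (Int.not_odd_iff_even.mp ht).two_dvd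
    exact hne (by rw [zpow_mul, zpow_natCast, zpow_mul, zpow_ofNat, hk, one_zpow])
  obtain ⟨s, rfl⟩ := ht
  rw [zpow_mul, zpow_natCast, zpow_add_one, zpow_mul, zpow_ofNat, hk, one_zpow, one_mul]

theorem disjoint_zpowers_of_pow_ne {m k : ℕ} (ha : orderOf a = 2 ^ (m + 1))
    (hb : orderOf b = 2 * k) (hne : a ^ 2 ^ m ≠ b ^ k) :
    Disjoint (Subgroup.zpowers a) (Subgroup.zpowers b) := by
  rw [Subgroup.disjoint_def]
  intro g hga hgb
  by_contra hg
  obtain ⟨d, -, hd⟩ := (Nat.dvd_prime_pow Nat.prime_two).mp (ha ▸ orderOf_dvd_of_mem_zpowers hga)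
  have heven : 2 ∣ orderOf g := by
    rw [hd]
    exact dvd_pow_self 2 fun hd0 => hg (orderOf_eq_one_iff.mp (by rw [hd, hd0, pow_zero]))
  have hinvol : orderOf (g ^ (orderOf g / 2)) = 2 :=
    orderOf_pow_orderOf_div (hd ▸ by positivity) heven
  apply hne
  rw [← eq_pow_of_mem_zpowers_of_orderOf_eq_two (ha.trans (pow_succ' 2 m)) (pow_mem hga _) hinvol,
    ← eq_pow_of_mem_zpowers_of_orderOf_eq_two hb (pow_mem hgb _) hinvol]

lemma pow_mul_pow_inj_of_disjoint_zpowers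
    (h : Disjoint (Subgroup.zpowers a) (Subgroup.zpowers b)) {e₁ e₂ f₁ f₂ : ℕ}
    (he₁ : e₁ < orderOf a) (he₂ : e₂ < orderOf b) (hf₁ : f₁ < orderOf a) (hf₂ : f₂ < orderOf b) :
    a ^ e₁ * b ^ e₂ = a ^ f₁ * b ^ f₂ ↔ e₁ = f₁ ∧ e₂ = f₂ := by
  refine ⟨fun heq => ?_, fun ⟨h₁, h₂⟩ => by rw [h₁, h₂]⟩
  have hpair := @Subgroup.mul_injective_of_disjoint _ _ _ _ h
    (⟨a ^ e₁, Subgroup.npow_mem_zpowers a e₁⟩, ⟨b ^ e₂, Subgroup.npow_mem_zpowers b e₂⟩)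
    (⟨a ^ f₁, Subgroup.npow_mem_zpowers a f₁⟩, ⟨b ^ f₂, Subgroup.npow_mem_zpowers b f₂⟩) heq
  obtain ⟨ha, hb⟩ : a ^ e₁ = a ^ f₁ ∧ b ^ e₂ = b ^ f₂ := by simpa using hpair
  exact ⟨pow_injOn_Iio_orderOf he₁ hf₁ ha, pow_injOn_Iio_orderOf he₂ hf₂ hb⟩

end Group

lemma mul_mul_mul_mul_of_mul_self_eq_neg_one {M : Type*} [Monoid M] [HasDistribNeg M] {u : M}
    (hu : u * u = -1) (x : M) : u * (u * x * u) * u = x := by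
  calc u * (u * x * u) * u = (u * u) * x * (u * u) := by simp only [mul_assoc]
    _ = x := by simp [hu]

instance {F : Type*} [Field F] [CharZero F] : IsAddTorsionFree ℍ[F] :=
  .of_isTorsionFree F _

lemma qi_mul_qi : qi * qi = -1 := by ext <;> simp <;> simp [qi]

lemma qk_mul_qk : qk * qk = -1 := by ext <;> simp <;> simp [qk]

lemma qj_mul_qk : qj * qk = qi := by ext <;> simp <;> simp [qi, qj, qk]

lemma qj_mul_qi : qj * qi = -qk := by ext <;> simp <;> simp [qi, qj, qk]

lemma qi_mul_qk : qi * qk = -qj := by ext <;> simp <;> simp [qi, qj, qk]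

lemma star_qi : star qi = -qi := star_eq_neg.mpr rfl

lemma star_qj : star qj = -qj := star_eq_neg.mpr rfl

lemma star_qk : star qk = -qk := star_eq_neg.mpr rfl

lemma k1_sq_apply (x : ℍ[ℝ]) : (k1 ^ 2) x = -(qi * x * qi) := by
  simp [sq, star_qi]

lemma k2_sq_apply (x : ℍ[ℝ]) : (k2 ^ 2) x = qi * x * qi := by
  calc (k2 ^ 2) x = (qj * qk) * x * (qj * qk) := by simp [sq, star_qj, star_qk, mul_assoc]
    _ = qi * x * qi := by rw [qj_mul_qk]

lemma k2_mul_k1_apply (x : ℍ[ℝ]) : (k2 * k1) x = qk * x * qk := by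
  calc (k2 * k1) x = -(qj * qi) * x * qk := by simp [star_qi, mul_assoc]
    _ = qk * x * qk := by rw [qj_mul_qi, neg_neg]

lemma k1_sq_ne_one : k1 ^ 2 ≠ 1 := by
  intro h
  have hqj : (k1 ^ 2) qj = -qj := by
    rw [k1_sq_apply, mul_assoc, qj_mul_qi, mul_neg, neg_neg, qi_mul_qk]
  have hzero : qj = 0 := by simpa [h, self_eq_neg] using hqj
  simpa [hzero] using norm_qj

lemma k2_sq_apply_one : (k2 ^ 2) 1 = -1 := by
  rw [k2_sq_apply, mul_one, qi_mul_qi]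

lemma k2_sq_ne_one : k2 ^ 2 ≠ 1 := by
  intro h
  simpa [h, self_eq_neg] using k2_sq_apply_one

lemma k1_sq_ne_k2_sq : k1 ^ 2 ≠ k2 ^ 2 := by
  intro h
  have hone : (k1 ^ 2) 1 = 1 := by rw [k1_sq_apply, mul_one, qi_mul_qi, neg_neg]
  simp [h, k2_sq_apply_one, neg_eq_self] at hone

lemma k1_pow_four : k1 ^ 4 = 1 := by
  ext1 x
  calc (k1 ^ 4) x = (k1 ^ 2) ((k1 ^ 2) x) := by rw [pow_add k1 2 2]; rfl
    _ = qi * (qi * x * qi) * qi := by simp only [k1_sq_apply, mul_neg, neg_mul, neg_neg]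
    _ = x := mul_mul_mul_mul_of_mul_self_eq_neg_one qi_mul_qi x

lemma k2_pow_four : k2 ^ 4 = 1 := by
  ext1 x
  calc (k2 ^ 4) x = (k2 ^ 2) ((k2 ^ 2) x) := by rw [pow_add k2 2 2]; rfl
    _ = qi * (qi * x * qi) * qi := by simp only [k2_sq_apply]
    _ = x := mul_mul_mul_mul_of_mul_self_eq_neg_one qi_mul_qi x

lemma orderOf_k1 : orderOf k1 = 4 :=
  orderOf_eq_prime_pow (p := 2) (n := 1) k1_sq_ne_one k1_pow_four

lemma orderOf_k2 : orderOf k2 = 4 :=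
  orderOf_eq_prime_pow (p := 2) (n := 1) k2_sq_ne_one k2_pow_four

lemma k2_mul_k1_sq_eq_one : (k2 * k1) ^ 2 = 1 := by
  ext1 x
  calc ((k2 * k1) ^ 2) x = (k2 * k1) ((k2 * k1) x) := by rw [sq]; rfl
    _ = qk * (qk * x * qk) * qk := by simp only [k2_mul_k1_apply]
    _ = x := mul_mul_mul_mul_of_mul_self_eq_neg_one qk_mul_qk x

lemma commute_k1_sq_k2 : Commute (k1 ^ 2) k2 := by
  have hneg (x : ℍ[ℝ]) : (k1 ^ 2) x = -(k2 ^ 2) x := by rw [k1_sq_apply, k2_sq_apply]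
  ext1 x
  calc (k1 ^ 2) (k2 x) = -(k2 ^ 2 * k2) x := hneg (k2 x)
    _ = -(k2 * k2 ^ 2) x := by rw [pow_mul_comm']
    _ = k2 (-(k2 ^ 2) x) := (map_neg k2 _).symm
    _ = k2 ((k1 ^ 2) x) := by rw [hneg]

lemma mem_K_iff {g : ℍ[ℝ] ≃ₗᵢ[ℝ] ℍ[ℝ]} : g ∈ K ↔ ∃ m n : ℤ, k1 ^ m * k2 ^ n = g :=
  mem_closure_pair_iff_of_commute_sq commute_k1_sq_k2 k2_mul_k1_sq_eq_one

lemma disjoint_zpowers_k1_k2 : Disjoint (Subgroup.zpowers k1) (Subgroup.zpowers k2) :=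
  disjoint_zpowers_of_pow_ne (m := 1) (k := 2) orderOf_k1 orderOf_k2 k1_sq_ne_k2_sq

/-- Every element of `K` can be written uniquely as `k₁^{e₁} ∘ k₂^{e₂}` with
`e₁, e₂ ∈ {0, 1, 2, 3}`. -/
theorem stmt_9 :
    (∀ g ∈ K, ∃ e₁ e₂ : ℕ, e₁ < 4 ∧ e₂ < 4 ∧ g = k1 ^ e₁ * k2 ^ e₂) ∧
    (∀ e₁ e₂ f₁ f₂ : ℕ, e₁ < 4 → e₂ < 4 → f₁ < 4 → f₂ < 4 →
      k1 ^ e₁ * k2 ^ e₂ = k1 ^ f₁ * k2 ^ f₂ → e₁ = f₁ ∧ e₂ = f₂) := by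
  constructor
  · intro g hg
    obtain ⟨m, n, rfl⟩ := mem_K_iff.mp hg
    obtain ⟨e₁, he₁, hpow₁⟩ := exists_pow_lt_orderOf_eq_zpow
      (orderOf_pos_iff.mp (orderOf_k1 ▸ four_pos)) m
    obtain ⟨e₂, he₂, hpow₂⟩ := exists_pow_lt_orderOf_eq_zpow
      (orderOf_pos_iff.mp (orderOf_k2 ▸ four_pos)) n
    exact ⟨e₁, e₂, orderOf_k1 ▸ he₁, orderOf_k2 ▸ he₂, by rw [hpow₁, hpow₂]⟩
  · intro e₁ e₂ f₁ f₂ he₁ he₂ hf₁ hf₂ h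
    rw [← orderOf_k1] at he₁ hf₁
    rw [← orderOf_k2] at he₂ hf₂
    exact (pow_mul_pow_inj_of_disjoint_zpowers disjoint_zpowers_k1_k2 he₁ he₂ hf₁ hf₂).mp h
end
end

section
/- Let a ≥ b be integers with a ≥ 2 and b ≥ 1, and set N = a² + b². Let z = exp(−((a+b)π/N)·i) = cos((a+b)π/N) − sin((a+b)π/N)·i and w = exp(((a−b)π/N)·i) = cos((a−b)π/N) + sin((a−b)π/N)·i, unit quaternions. Then the ℝ-linear isometry [z,w] of ℍ given by x ↦ z̄ x w has no invariant 1-dimensional ℝ-subspace. -/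
open Quaternion

noncomputable section

/-- For quaternions `z, w`, the ℝ-linear map `[z,w] : x ↦ z̄ x w` on `ℍ`. -/
def qrot (z w : ℍ[ℝ]) : ℍ[ℝ] →ₗ[ℝ] ℍ[ℝ] :=
  (LinearMap.mulRight ℝ w).comp (LinearMap.mulLeft ℝ (star z))

/-! Let `v ≠ 0` span an invariant line of `[z,w]`, so `z̄ v w = c v` with `c` real.
Multiplicativity of the norm gives `c² = |z|² |w|²`, while `|z|² v w v̄ = c |v|² z` and the
conjugation invariance of the real part give `|z|² Re w = c Re z`. Hence unit `z, w` satisfy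
`(Re w)² = (Re z)²`. For `z = exp(-β i)` and `w = exp(α i)` this says
`sin (β + α) sin (β - α) = 0`, and here `β + α = 2aπ/N` and `β - α = 2bπ/N` are not integer
multiples of `π`. -/

section LinearAlgebra

variable {R M : Type*} [CommRing R] [Nontrivial R] [AddCommGroup M] [Module R M]

theorem exists_hasEigenvector_of_finrank_eq_one (f : Module.End R M) {L : Submodule R M}
    [Module.Free R L] (hL : Module.finrank R L = 1) (hf : L ≤ L.comap f) :
    ∃ c v, f.HasEigenvector c v := by
  obtain ⟨v, hv_ne, hv_span⟩ := finrank_eq_one_iff'.mp hL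
  obtain ⟨c, hc⟩ := hv_span ⟨f v, hf v.2⟩
  exact ⟨c, v, Module.End.hasEigenvector_iff.mpr
    ⟨Module.End.mem_eigenspace_iff.mpr (congrArg Subtype.val hc).symm, by simpa using hv_ne⟩⟩

end LinearAlgebra

section Quaternion

theorem re_mul_mul_star {R : Type*} [CommRing R] (v w : ℍ[R]) :
    (v * w * star v).re = normSq v * w.re := by
  simp only [re_mul, imI_mul, imJ_mul, imK_mul, re_star, imI_star, imJ_star, imK_star,
    normSq_def']
  ring

theorem normSq_mk_zero_zero {R : Type*} [CommRing R] (x y : R) :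
    normSq (⟨x, y, 0, 0⟩ : ℍ[R]) = x ^ 2 + y ^ 2 :=
  (normSq_def' _).trans (by simp)

variable {R : Type*} [CommRing R] [LinearOrder R] [IsStrictOrderedRing R] {z w v : ℍ[R]} {c : R}

theorem sq_eq_normSq_mul_normSq_of_star_mul_mul_eq_smul (hv : v ≠ 0)
    (h : star z * v * w = c • v) : c ^ 2 = normSq z * normSq w := by
  have hnorm := congrArg normSq h
  rw [map_mul, map_mul, normSq_star, normSq_smul] at hnorm
  refine mul_right_cancel₀ (normSq_ne_zero.mpr hv) ?_
  linear_combination -hnorm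

theorem normSq_mul_re_eq_mul_re_of_star_mul_mul_eq_smul (hv : v ≠ 0)
    (h : star z * v * w = c • v) : normSq z * w.re = c * z.re := by
  have hconj : normSq z • (v * w * star v) = (c * normSq v) • z := by
    calc normSq z • (v * w * star v)
        = z * (star z * v * w) * star v := by
          rw [← coe_mul_eq_smul, ← self_mul_star]; simp only [mul_assoc]
      _ = (c * normSq v) • z := by
          rw [h, mul_smul_comm, smul_mul_assoc, mul_assoc, self_mul_star, mul_coe_eq_smul,
            smul_smul]
  have hre := congrArg (fun q : ℍ[R] => q.re) hconj
  simp only [re_smul, smul_eq_mul, re_mul_mul_star] at hre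
  refine mul_right_cancel₀ (normSq_ne_zero.mpr hv) ?_
  linear_combination hre

theorem normSq_mul_re_sq_eq_of_star_mul_mul_eq_smul (hv : v ≠ 0)
    (h : star z * v * w = c • v) : normSq z * w.re ^ 2 = normSq w * z.re ^ 2 := by
  rcases eq_or_ne z 0 with rfl | hz
  · simp
  · have hc := sq_eq_normSq_mul_normSq_of_star_mul_mul_eq_smul hv h
    have hre := normSq_mul_re_eq_mul_re_of_star_mul_mul_eq_smul hv h
    refine mul_left_cancel₀ (normSq_ne_zero.mpr hz) ?_
    calc normSq z * (normSq z * w.re ^ 2) = (normSq z * w.re) ^ 2 := by ring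
      _ = c ^ 2 * z.re ^ 2 := by rw [hre, mul_pow]
      _ = normSq z * (normSq w * z.re ^ 2) := by rw [hc, mul_assoc]

end Quaternion

theorem normSq_mul_re_sq_eq_of_map_qrot_le {z w : ℍ[ℝ]} {L : Submodule ℝ ℍ[ℝ]}
    (hL : Module.finrank ℝ L = 1) (hmap : L.map (qrot z w) ≤ L) :
    normSq z * w.re ^ 2 = normSq w * z.re ^ 2 := by
  obtain ⟨c, v, hv⟩ := exists_hasEigenvector_of_finrank_eq_one (qrot z w) hL
    (Submodule.map_le_iff_le_comap.mp hmap)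
  exact normSq_mul_re_sq_eq_of_star_mul_mul_eq_smul hv.2 hv.apply_eq_smul

theorem sin_add_mul_sin_sub (x y : ℝ) :
    Real.sin (x + y) * Real.sin (x - y) = Real.cos y ^ 2 - Real.cos x ^ 2 := by
  rw [Real.sin_add, Real.sin_sub]
  linear_combination Real.cos y ^ 2 * Real.sin_sq_add_cos_sq x -
    Real.cos x ^ 2 * Real.sin_sq_add_cos_sq y

theorem sin_add_mul_sin_sub_eq_zero_of_map_qrot_le {α β : ℝ} {L : Submodule ℝ ℍ[ℝ]}
    (hL : Module.finrank ℝ L = 1)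
    (hmap : L.map (qrot ⟨Real.cos β, -Real.sin β, 0, 0⟩ ⟨Real.cos α, Real.sin α, 0, 0⟩) ≤ L) :
    Real.sin (β + α) * Real.sin (β - α) = 0 := by
  have hre := normSq_mul_re_sq_eq_of_map_qrot_le hL hmap
  rw [normSq_mk_zero_zero, normSq_mk_zero_zero, neg_sq, Real.cos_sq_add_sin_sq,
    Real.cos_sq_add_sin_sq, one_mul, one_mul] at hre
  rw [sin_add_mul_sin_sub, sub_eq_zero]
  exact hre

theorem sin_mul_pi_ne_zero {x : ℝ} (hx : x ∉ Set.range ((↑) : ℤ → ℝ)) :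
    Real.sin (x * Real.pi) ≠ 0 :=
  Real.sin_ne_zero_iff.mpr fun n hn => hx ⟨n, mul_right_cancel₀ Real.pi_ne_zero hn⟩

theorem div_notMem_range_intCast {K : Type*} [Field K] [LinearOrder K] [IsStrictOrderedRing K]
    {x y : K} (hx : 0 < x) (hxy : x < y) : x / y ∉ Set.range ((↑) : ℤ → K) := by
  rintro ⟨n, hn⟩
  have hpos : 0 < n := Int.cast_pos.mp (hn ▸ div_pos hx (hx.trans hxy))
  have hlt : n < 1 := by exact_mod_cast hn ▸ (div_lt_one (hx.trans hxy)).mpr hxy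
  lia

theorem stmt_17_general (a b : ℝ) (ha : 2 * a / (a ^ 2 + b ^ 2) ∉ Set.range ((↑) : ℤ → ℝ))
    (hb : 2 * b / (a ^ 2 + b ^ 2) ∉ Set.range ((↑) : ℤ → ℝ)) :
    let N : ℝ := a ^ 2 + b ^ 2
    let z : ℍ[ℝ] := ⟨Real.cos ((a + b) * Real.pi / N), -Real.sin ((a + b) * Real.pi / N), 0, 0⟩
    let w : ℍ[ℝ] := ⟨Real.cos ((a - b) * Real.pi / N), Real.sin ((a - b) * Real.pi / N), 0, 0⟩
    ¬ ∃ L : Submodule ℝ ℍ[ℝ], Module.finrank ℝ L = 1 ∧ L.map (qrot z w) = L := by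
  rintro N z w ⟨L, hL, hmap⟩
  have hadd : (a + b) * Real.pi / N + (a - b) * Real.pi / N = 2 * a / N * Real.pi := by ring
  have hsub : (a + b) * Real.pi / N - (a - b) * Real.pi / N = 2 * b / N * Real.pi := by ring
  have hsin := sin_add_mul_sin_sub_eq_zero_of_map_qrot_le hL hmap.le
  rw [hadd, hsub] at hsin
  exact mul_ne_zero (sin_mul_pi_ne_zero ha) (sin_mul_pi_ne_zero hb) hsin

/-- Let `a ≥ b` be integers with `a ≥ 2`, `b ≥ 1`, and `N = a² + b²`. With
`z = exp(−((a+b)π/N)·i)` and `w = exp(((a−b)π/N)·i)`, the isometry `[z,w] : x ↦ z̄ x w` of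
`ℍ` has no invariant 1-dimensional ℝ-subspace. -/
theorem stmt_17 (a b : ℤ) (hba : b ≤ a) (ha : 2 ≤ a) (hb : 1 ≤ b) :
    let N : ℝ := (a : ℝ) ^ 2 + (b : ℝ) ^ 2
    let z : ℍ[ℝ] := ⟨Real.cos (((a : ℝ) + b) * Real.pi / N),
      -Real.sin (((a : ℝ) + b) * Real.pi / N), 0, 0⟩
    let w : ℍ[ℝ] := ⟨Real.cos (((a : ℝ) - b) * Real.pi / N),
      Real.sin (((a : ℝ) - b) * Real.pi / N), 0, 0⟩
    ¬ ∃ L : Submodule ℝ ℍ[ℝ], Module.finrank ℝ L = 1 ∧ L.map (qrot z w) = L := by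
  have haR : (2 : ℝ) ≤ a := by exact_mod_cast ha
  have hbR : (1 : ℝ) ≤ b := by exact_mod_cast hb
  exact stmt_17_general a b (div_notMem_range_intCast (by linarith) (by nlinarith))
    (div_notMem_range_intCast (by linarith) (by nlinarith))
end
end

section
/- Let ω = (−1 + i + j + k)/2, i_I = (1/2)(i + ((√5−1)/2)·j + ((√5+1)/2)·k), and i'_I = (1/2)(−((√5−1)/2)·i − ((√5+1)/2)·j + k), unit quaternions. Set z = ω·i_I. Then neither of the ℝ-linear isometries of ℍ given by x ↦ z̄ x (−ω·i'_I) and x ↦ z̄ x (ω·i'_I) has an invariant 1-dimensional ℝ-subspace. (Indeed, the real parts of z and of ±ω·i'_I are distinct: Re(z) = −(√5+1)/4 while Re(±ω·i'_I) = ±(√5−1)/4.) -/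
open Quaternion

noncomputable section

/-- `ω = (−1 + i + j + k)/2`. -/
noncomputable def ω : ℍ[ℝ] := ⟨-(1 / 2), 1 / 2, 1 / 2, 1 / 2⟩

/-- `i_I = (1/2)(i + ((√5−1)/2)·j + ((√5+1)/2)·k)`. -/
noncomputable def iI : ℍ[ℝ] := ⟨0, 1 / 2, (Real.sqrt 5 - 1) / 4, (Real.sqrt 5 + 1) / 4⟩

/-- `i'_I = (1/2)(−((√5−1)/2)·i − ((√5+1)/2)·j + k)`. -/
noncomputable def iI' : ℍ[ℝ] := ⟨0, -((Real.sqrt 5 - 1) / 4), -((Real.sqrt 5 + 1) / 4), 1 / 2⟩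

/-!
A line invariant under `x ↦ z̄ x w` is spanned by an eigenvector `x`. Multiplying `z̄ x w = c x` on
the left by `x̄ z` gives `|z|² x̄ x w = c x̄ z x`, and since conjugation does not change real parts,
`|z|² Re w = c Re z`; taking norms gives `c² = |z|² |w|²`. So for unit `z` and `w` an invariant line
forces `Re w = ± Re z`.
-/

section Eigenvalue

variable {R M : Type*} [CommRing R] [Nontrivial R] [AddCommGroup M] [Module R M]

theorem exists_hasEigenvalue_of_mem_invtSubmodule {f : Module.End R M} {L : Submodule R M}
    [Module.Free R L] (hL : Module.finrank R L = 1) (hf : L ∈ f.invtSubmodule) :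
    ∃ c, f.HasEigenvalue c := by
  obtain ⟨x, hx, hspan⟩ := finrank_eq_one_iff'.1 hL
  obtain ⟨c, hc⟩ := hspan ⟨f x, hf x.2⟩
  have hfx : f x = c • (x : M) := (congrArg Subtype.val hc).symm
  exact ⟨c, Module.End.hasEigenvalue_of_hasEigenvector
    ⟨Module.End.mem_eigenspace_iff.2 hfx, Subtype.coe_ne_coe.2 hx⟩⟩

end Eigenvalue

section RealPart

variable {R : Type*} [CommRing R]

theorem quaternion_re_mul_comm (a b : ℍ[R]) : (a * b).re = (b * a).re := by
  simp only [re_mul]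
  ring

theorem quaternion_re_star_mul_mul_self (x a : ℍ[R]) :
    (star x * a * x).re = normSq x * a.re := by
  rw [quaternion_re_mul_comm, ← mul_assoc, self_mul_star, coe_mul_eq_smul, re_smul, smul_eq_mul]

end RealPart

section QRot

variable {z w : ℍ[ℝ]} {c : ℝ}

theorem qrot_apply (z w x : ℍ[ℝ]) : qrot z w x = star z * x * w := rfl

theorem sq_eq_normSq_mul_of_hasEigenvalue_qrot
    (h : Module.End.HasEigenvalue (qrot z w) c) : c ^ 2 = normSq z * normSq w := by
  obtain ⟨x, hx⟩ := h.exists_hasEigenvector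
  refine mul_right_cancel₀ (normSq_ne_zero.2 hx.2) ?_
  calc c ^ 2 * normSq x = normSq (qrot z w x) := by rw [hx.apply_eq_smul, normSq_smul]
    _ = normSq z * normSq w * normSq x := by
      rw [qrot_apply, map_mul, map_mul, normSq_star, mul_right_comm]

theorem normSq_mul_re_eq_of_hasEigenvalue_qrot
    (h : Module.End.HasEigenvalue (qrot z w) c) : normSq z * w.re = c * z.re := by
  obtain ⟨x, hx⟩ := h.exists_hasEigenvector
  have hzx : z * qrot z w x = normSq z • (x * w) := by
    rw [qrot_apply, mul_assoc, ← mul_assoc z, self_mul_star, coe_mul_eq_smul]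
  have hxzx : star x * (z * qrot z w x) = normSq x • normSq z • w := by
    rw [hzx, mul_smul_comm, ← mul_assoc, star_mul_self, coe_mul_eq_smul, smul_comm]
  refine mul_left_cancel₀ (normSq_ne_zero.2 hx.2) ?_
  calc normSq x * (normSq z * w.re) = (star x * (z * qrot z w x)).re := by
        rw [hxzx, re_smul, re_smul, smul_eq_mul, smul_eq_mul]
    _ = c * (star x * z * x).re := by
        rw [hx.apply_eq_smul, mul_smul_comm, mul_smul_comm, re_smul, smul_eq_mul, mul_assoc]
    _ = normSq x * (c * z.re) := by rw [quaternion_re_star_mul_mul_self, mul_left_comm]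

theorem normSq_mul_re_sq_eq_of_hasEigenvalue_qrot
    (h : Module.End.HasEigenvalue (qrot z w) c) :
    normSq z * w.re ^ 2 = normSq w * z.re ^ 2 := by
  rcases eq_or_ne z 0 with rfl | hz
  · simp
  refine mul_left_cancel₀ (normSq_ne_zero.2 hz) ?_
  calc normSq z * (normSq z * w.re ^ 2) = (normSq z * w.re) ^ 2 := by ring
    _ = c ^ 2 * z.re ^ 2 := by rw [normSq_mul_re_eq_of_hasEigenvalue_qrot h, mul_pow]
    _ = normSq z * (normSq w * z.re ^ 2) := by
      rw [sq_eq_normSq_mul_of_hasEigenvalue_qrot h, mul_assoc]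

theorem not_exists_finrank_eq_one_map_qrot_eq
    (h : normSq z * w.re ^ 2 ≠ normSq w * z.re ^ 2) :
    ¬ ∃ L : Submodule ℝ ℍ[ℝ], Module.finrank ℝ L = 1 ∧ L.map (qrot z w) = L := by
  rintro ⟨L, hL, hmap⟩
  have hinv : L ∈ Module.End.invtSubmodule (qrot z w) :=
    (Module.End.mem_invtSubmodule_iff_map_le _).2 hmap.le
  obtain ⟨c, hc⟩ := exists_hasEigenvalue_of_mem_invtSubmodule hL hinv
  exact h (normSq_mul_re_sq_eq_of_hasEigenvalue_qrot hc)

end QRot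

theorem normSq_ω : normSq ω = 1 := by
  rw [normSq_def']
  norm_num [ω]

theorem normSq_iI : normSq iI = 1 := by
  rw [normSq_def']
  simp only [iI]
  linarith [Real.sq_sqrt (show (0 : ℝ) ≤ 5 by norm_num)]

theorem normSq_iI' : normSq iI' = 1 := by
  rw [normSq_def']
  simp only [iI']
  linarith [Real.sq_sqrt (show (0 : ℝ) ≤ 5 by norm_num)]

theorem normSq_ω_mul_iI : normSq (ω * iI) = 1 := by
  rw [map_mul, normSq_ω, normSq_iI, one_mul]

theorem normSq_ω_mul_iI' : normSq (ω * iI') = 1 := by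
  rw [map_mul, normSq_ω, normSq_iI', one_mul]

theorem re_ω_mul_iI : (ω * iI).re = -((√5 + 1) / 4) := by
  rw [re_mul]
  simp only [ω, iI]
  ring

theorem re_ω_mul_iI' : (ω * iI').re = (√5 - 1) / 4 := by
  rw [re_mul]
  simp only [ω, iI']
  ring

theorem re_sq_ω_mul_iI'_lt : (ω * iI').re ^ 2 < (ω * iI).re ^ 2 := by
  rw [re_ω_mul_iI, re_ω_mul_iI']
  linarith [Real.sqrt_pos.2 (show (0 : ℝ) < 5 by norm_num)]

/-- With `z = ω·i_I`, neither of the maps `x ↦ z̄ x (−ω·i'_I)` and `x ↦ z̄ x (ω·i'_I)` has an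
invariant 1-dimensional ℝ-subspace; indeed `Re(z) = −(√5+1)/4` while
`Re(±ω·i'_I) = ±(√5−1)/4`. -/
theorem stmt_18 :
    (¬ ∃ L : Submodule ℝ ℍ[ℝ], Module.finrank ℝ L = 1 ∧
        L.map (qrot (ω * iI) (-(ω * iI'))) = L) ∧
    (¬ ∃ L : Submodule ℝ ℍ[ℝ], Module.finrank ℝ L = 1 ∧
        L.map (qrot (ω * iI) (ω * iI')) = L) ∧
    (ω * iI).re = -((Real.sqrt 5 + 1) / 4) ∧
    (ω * iI').re = (Real.sqrt 5 - 1) / 4 ∧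
    (-(ω * iI')).re = -((Real.sqrt 5 - 1) / 4) := by
  have hne : normSq (ω * iI) * (ω * iI').re ^ 2 ≠ normSq (ω * iI') * (ω * iI).re ^ 2 := by
    rw [normSq_ω_mul_iI, normSq_ω_mul_iI', one_mul, one_mul]
    exact re_sq_ω_mul_iI'_lt.ne
  have hne_neg : normSq (ω * iI) * (-(ω * iI')).re ^ 2 ≠
      normSq (-(ω * iI')) * (ω * iI).re ^ 2 := by
    rwa [normSq_neg, re_neg, neg_sq]
  exact ⟨not_exists_finrank_eq_one_map_qrot_eq hne_neg, not_exists_finrank_eq_one_map_qrot_eq hne,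
    re_ω_mul_iI, re_ω_mul_iI', by rw [re_neg, re_ω_mul_iI']⟩
end
end
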